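/- arXiv:2010.03254 — 2 statements merged into one kernel-verified Lean document; each statement's English description precedes it below -/
import Mathlib

section
/- Let P : ℤ → ℝ/ℤ be given by P(n) = α₀ + α₁n + ⋯ + α_d n^d with at least one of α₁,…,α_d irrational (as elements of ℝ/ℤ, i.e., not torsion). Then P is equidistributed: for every continuous F : ℝ/ℤ → ℝ, (1/(2N+1)) Σ_{n=−N}^{N} F(P(n)) → ∫_{ℝ/ℤ} F. In particular, the range of P is dense in ℝ/ℤ, so P cannot avoid any interval of positive length. -/
open MeasureTheory Filter

section helpers
open Asymptotics

noncomputable def wE (x : ℝ) : ℂ := Complex.exp (2 * Real.pi * Complex.I * x)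

lemma wE_add (x y : ℝ) : wE (x + y) = wE x * wE y := by
  simp [wE, mul_add, Complex.exp_add]

lemma wE_norm (x : ℝ) : ‖wE x‖ = 1 := by
  have := Complex.norm_exp_ofReal_mul_I (2 * Real.pi * x)
  rw [← this, wE]; congr 2; push_cast; ring

lemma wE_conj (x : ℝ) : (starRingEnd ℂ) (wE x) = wE (-x) := by
  simp only [wE, ← Complex.exp_conj]; congr 1; simp [Complex.conj_ofNat]

lemma wE_int (z : ℤ) : wE z = 1 := by
  simp only [wE]; rw [Complex.exp_eq_one_iff]; exact ⟨z, by push_cast; ring⟩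

lemma wE_ne_one {x : ℝ} (hx : Irrational x) : wE x ≠ 1 := by
  intro h
  simp only [wE] at h
  rw [Complex.exp_eq_one_iff] at h
  obtain ⟨n, hn⟩ := h
  have h2 : (2 * Real.pi * Complex.I : ℂ) ≠ 0 := by simp [Real.pi_ne_zero]
  have h3 : (x : ℂ) = n := by
    apply mul_left_cancel₀ h2; rw [hn]; ring
  exact hx ⟨n, by exact_mod_cast h3.symm⟩

/-- van der Corput -/
lemma vdc (u : ℕ → ℂ) (hu : ∀ n, ‖u n‖ ≤ 1)
    (hc : ∀ h h' : ℕ, h ≠ h' →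
      (fun N : ℕ => ∑ n ∈ Finset.range N, u (n + h) * (starRingEnd ℂ) (u (n + h')))
        =o[atTop] (fun N : ℕ => (N : ℝ))) :
    (fun N : ℕ => ∑ n ∈ Finset.range N, u n) =o[atTop] (fun N : ℕ => (N : ℝ)) := by
  classical
  have shift : ∀ h N : ℕ, ‖∑ n ∈ Finset.range N, u n - ∑ n ∈ Finset.range N, u (n + h)‖ ≤ 2 * h := by
    intro h N
    have e1 := Finset.sum_range_add u h N
    have e2 := Finset.sum_range_add u N h
    rw [add_comm N h, e1] at e2
    have e3 : ∑ n ∈ Finset.range N, u n - ∑ n ∈ Finset.range N, u (n + h)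
        = ∑ x ∈ Finset.range h, u x - ∑ x ∈ Finset.range h, u (N + x) := by
      simp only [add_comm _ h] at e2 ⊢
      simp only [add_comm h] at e2 ⊢
      linear_combination -e2
    rw [e3]
    have k1 : ‖∑ x ∈ Finset.range h, u (N + x)‖ ≤ h := by
      simpa using norm_sum_le_of_le (Finset.range h) (n := fun _ => (1 : ℝ)) (f := fun x => u (N + x)) (fun x _ => hu _)
    have k2 : ‖∑ x ∈ Finset.range h, u x‖ ≤ h := by
      simpa using norm_sum_le_of_le (Finset.range h) (n := fun _ => (1 : ℝ)) (f := fun x => u x) (fun x _ => hu _)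
    linarith [norm_sub_le (∑ x ∈ Finset.range h, u x) (∑ x ∈ Finset.range h, u (N + x))]
  rw [isLittleO_iff]
  intro ε hε
  obtain ⟨H, hH⟩ := exists_nat_gt (8 / ε ^ 2)
  have hH0 : (0 : ℝ) < H := lt_trans (by positivity) hH
  have hHε : 8 < ε ^ 2 * H := by rwa [div_lt_iff₀' (by positivity)] at hH
  have hoff : (fun N : ℕ => ∑ p ∈ (Finset.range H).offDiag,
      ∑ n ∈ Finset.range N, u (n + p.1) * (starRingEnd ℂ) (u (n + p.2)))
        =o[atTop] (fun N : ℕ => (N : ℝ)) := by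
    apply IsLittleO.fun_sum
    intro p hp
    exact hc _ _ (Finset.mem_offDiag.1 hp).2.2
  have h1 := (isLittleO_iff.1 hoff) (show (0 : ℝ) < 1 by norm_num)
  filter_upwards [h1, eventually_ge_atTop (Nat.ceil (4 * H / ε))] with N hN hN2
  have hN2' : 4 * H / ε ≤ N := (Nat.le_ceil _).trans (by exact_mod_cast hN2)
  rw [div_le_iff₀ hε] at hN2'
  simp only [RCLike.norm_natCast, one_mul] at hN ⊢
  set A := ∑ n ∈ Finset.range N, u n with hA
  set B := ∑ n ∈ Finset.range N, ∑ h ∈ Finset.range H, u (n + h) with hB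
  have hAB : ‖H * A - B‖ ≤ H * (2 * H) := by
    have : H * A - B = ∑ h ∈ Finset.range H, (A - ∑ n ∈ Finset.range N, u (n + h)) := by
      rw [hB, Finset.sum_comm, Finset.sum_sub_distrib]; simp
    rw [this]
    refine (norm_sum_le_of_le (Finset.range H) (f := fun h => (A - ∑ n ∈ Finset.range N, u (n + h))) (n := fun _ => (2 * H : ℝ)) ?_).trans ?_
    · intro h hh
      refine (shift h N).trans ?_
      have : (h : ℝ) ≤ H := by exact_mod_cast (Finset.mem_range.1 hh).le
      linarith
    · simp
  have hexp : ((∑ n ∈ Finset.range N, ‖∑ h ∈ Finset.range H, u (n + h)‖ ^ 2 : ℝ) : ℂ)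
      = ∑ h ∈ Finset.range H, ∑ n ∈ Finset.range N, u (n + h) * (starRingEnd ℂ) (u (n + h)) +
        ∑ p ∈ (Finset.range H).offDiag,
      ∑ n ∈ Finset.range N, u (n + p.1) * (starRingEnd ℂ) (u (n + p.2)) := by
    have e1 : ((∑ n ∈ Finset.range N, ‖∑ h ∈ Finset.range H, u (n + h)‖ ^ 2 : ℝ) : ℂ)
      = ∑ p ∈ (Finset.range H) ×ˢ (Finset.range H),
      ∑ n ∈ Finset.range N, u (n + p.1) * (starRingEnd ℂ) (u (n + p.2)) := by
      rw [Finset.sum_comm]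
      push_cast
      refine Finset.sum_congr rfl fun n _ => ?_
      rw [← Complex.mul_conj', map_sum, Finset.sum_mul_sum, Finset.sum_product]
    rw [e1, ← Finset.diag_union_offDiag, Finset.sum_union (Finset.disjoint_diag_offDiag _)]
    congr 1
    simp
  have hB2 : ∑ n ∈ Finset.range N, ‖∑ h ∈ Finset.range H, u (n + h)‖ ^ 2 ≤ H * N + N := by
    have e2 : ∑ n ∈ Finset.range N, ‖∑ h ∈ Finset.range H, u (n + h)‖ ^ 2 =
       ‖((∑ n ∈ Finset.range N, ‖∑ h ∈ Finset.range H, u (n + h)‖ ^ 2 : ℝ) : ℂ)‖ := by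
      rw [Complex.norm_real, Real.norm_of_nonneg]; positivity
    rw [e2, hexp]
    refine (norm_add_le _ _).trans (add_le_add ?_ hN)
    refine (norm_sum_le_of_le (Finset.range H) (n := fun _ => (N : ℝ)) ?_).trans ?_
    · intro h hh
      refine (norm_sum_le_of_le (Finset.range N) (n := fun _ => (1 : ℝ)) ?_).trans ?_
      · intro n hn
        rw [norm_mul, RCLike.norm_conj]
        have := hu (n + h)
        have := norm_nonneg (u (n + h))
        nlinarith
      · simp
    · simp
  have hBsq : ‖B‖ ^ 2 ≤ N * (H * N + N) := by
    have h1 : ‖B‖ ≤ ∑ n ∈ Finset.range N, ‖∑ h ∈ Finset.range H, u (n + h)‖ := norm_sum_le _ _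
    have h2 := sq_sum_le_card_mul_sum_sq (s := Finset.range N) (f := fun n => ‖∑ h ∈ Finset.range H, u (n + h)‖)
    rw [Finset.card_range] at h2
    calc ‖B‖ ^ 2 ≤ (∑ n ∈ Finset.range N, ‖∑ h ∈ Finset.range H, u (n + h)‖) ^ 2 := by gcongr
      _ ≤ _ := h2
      _ ≤ _ := by gcongr
  have hH1 : (1 : ℝ) ≤ H := by exact_mod_cast Nat.one_le_iff_ne_zero.2 (by rintro rfl; simp at hH0)
  have hBn : ‖B‖ ≤ ε / 2 * H * N := by
    refine (le_abs_self _).trans (abs_le_of_sq_le_sq ?_ (by positivity))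
    refine hBsq.trans ?_
    have : (H : ℝ) + 1 ≤ ε ^ 2 * H / 4 * H := by nlinarith
    calc (N : ℝ) * (H * N + N) = (H + 1) * N ^ 2 := by ring
      _ ≤ (ε ^ 2 * H / 4 * H) * N ^ 2 := by gcongr
      _ = _ := by ring
  have hfin : H * ‖A‖ ≤ H * (ε * N) := by
    have : (H : ℝ) * ‖A‖ = ‖(H : ℂ) * A‖ := by simp
    rw [this]
    have h3 : ‖(H : ℂ) * A‖ ≤ ‖H * A - B‖ + ‖B‖ := by simpa using norm_add_le (H * A - B) B
    nlinarith
  exact le_of_mul_le_mul_left hfin hH0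

lemma periodic_case (f : ℕ → ℂ) (hf : ∀ n, ‖f n‖ ≤ 1) (q : ℕ) (ω : ℂ) (hω : ω ≠ 1)
    (h : ∀ n, f (n + q) = ω * f n) :
    (fun N : ℕ => ∑ n ∈ Finset.range N, f n) =o[atTop] (fun N : ℕ => (N : ℝ)) := by
  have bd : ∀ N, ‖∑ n ∈ Finset.range N, f n‖ ≤ 2 * q / ‖ω - 1‖ := by
    intro N
    have e1 := Finset.sum_range_add f q N
    have e2 := Finset.sum_range_add f N q
    have e3 : ∑ x ∈ Finset.range N, f (q + x) = ω * ∑ n ∈ Finset.range N, f n := by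
      rw [Finset.mul_sum]; refine Finset.sum_congr rfl fun n _ => ?_
      rw [add_comm, h]
    rw [e3] at e1
    rw [add_comm N q, e1] at e2
    have e4 : (∑ n ∈ Finset.range N, f n) * (ω - 1) = ∑ x ∈ Finset.range q, f (N + x) - ∑ x ∈ Finset.range q, f x := by
      linear_combination e2
    rw [le_div_iff₀ (norm_pos_iff.2 (sub_ne_zero.2 hω)), ← norm_mul, e4]
    have k1 : ‖∑ x ∈ Finset.range q, f (N + x)‖ ≤ q := by
      simpa using norm_sum_le_of_le (Finset.range q) (n := fun _ => (1 : ℝ)) (f := fun x => f (N + x)) (fun x _ => hf _)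
    have k2 : ‖∑ x ∈ Finset.range q, f x‖ ≤ q := by
      simpa using norm_sum_le_of_le (Finset.range q) (n := fun _ => (1 : ℝ)) (f := fun x => f x) (fun x _ => hf _)
    linarith [norm_sub_le (∑ x ∈ Finset.range q, f (N + x)) (∑ x ∈ Finset.range q, f x)]
  have : (fun N : ℕ => ∑ n ∈ Finset.range N, f n) =O[atTop] (fun _ : ℕ => (1 : ℝ)) :=
    IsBigO.of_bound _ (Eventually.of_forall fun N => by simpa using bd N)
  refine this.trans_isLittleO ?_
  rw [isLittleO_const_left]
  right
  simpa [Function.comp_def] using tendsto_natCast_atTop_atTop (R := ℝ)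

lemma weyl_base (D : ℕ) (α : ℕ → ℝ) (hD : 1 < D) (hirr : Irrational (α 1))
    (hrat : ∀ j, 1 < j → j < D → α j ∈ (algebraMap ℚ ℝ).range) :
    (fun N : ℕ => ∑ n ∈ Finset.range N, wE (∑ i ∈ Finset.range D, α i * (n : ℝ) ^ i))
      =o[atTop] (fun N : ℕ => (N : ℝ)) := by
  have hc : ∀ j, ∃ c : ℚ, 1 < j → j < D → α j = c := by
    intro j
    by_cases h : 1 < j ∧ j < D
    · obtain ⟨c, hc⟩ := hrat j h.1 h.2
      exact ⟨c, fun _ _ => by rw [← hc]; simp⟩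
    · exact ⟨0, fun h1 h2 => absurd ⟨h1, h2⟩ h⟩
  choose c hc using hc
  set q : ℕ := ∏ j ∈ Finset.range D, (c j).den with hq
  have hq0 : q ≠ 0 := Finset.prod_ne_zero_iff.2 fun j _ => (c j).den_nz
  have hint : ∀ (n i : ℕ), i < D → ∃ z : ℤ, α i * ((n + q : ℕ) : ℝ) ^ i - α i * (n : ℝ) ^ i
      = z + (if i = 1 then α 1 * q else 0) := by
    intro n i hi
    rcases Nat.lt_or_ge 1 i with h1 | h1
    · have hd : ((c i).den : ℤ) ∣ ((n + q : ℕ) : ℤ) ^ i - (n : ℤ) ^ i := by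
        refine dvd_trans ?_ (sub_dvd_pow_sub_pow _ _ _)
        have : ((n + q : ℕ) : ℤ) - n = (q : ℤ) := by push_cast; ring
        rw [this]
        exact_mod_cast Finset.dvd_prod_of_mem (fun j => (c j).den) (Finset.mem_range.2 hi)
      obtain ⟨w, hw⟩ := hd
      refine ⟨(c i).num * w, ?_⟩
      have hw' : ((n + q : ℕ) : ℝ) ^ i - (n : ℝ) ^ i = (c i).den * w := by exact_mod_cast hw
      rw [if_neg (by omega), ← mul_sub, hw', hc i h1 hi, ← mul_assoc]
      have : (c i : ℝ) * (c i).den = (c i).num := by exact_mod_cast Rat.mul_den_eq_num (c i)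
      rw [this]; push_cast; ring
    · interval_cases i
      · exact ⟨0, by simp⟩
      · exact ⟨0, by simp; ring⟩
  refine periodic_case (fun n : ℕ => wE (∑ i ∈ Finset.range D, α i * (n : ℝ) ^ i))
    (fun n => (wE_norm _).le) q (wE (α 1 * q)) ?_ ?_
  · exact wE_ne_one (hirr.mul_natCast hq0)
  · intro n
    choose! z hz using hint n
    have e : ∑ i ∈ Finset.range D, α i * ((n + q : ℕ) : ℝ) ^ i =
        ((∑ i ∈ Finset.range D, z i : ℤ) : ℝ) + (α 1 * q + ∑ i ∈ Finset.range D, α i * (n : ℝ) ^ i) := by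
      rw [← add_assoc, ← sub_eq_iff_eq_add, ← Finset.sum_sub_distrib,
        Finset.sum_congr rfl (fun i hi => hz i (Finset.mem_range.1 hi)), Finset.sum_add_distrib]
      simp [hD]
    simp only [e, wE_add, wE_int, one_mul]

lemma weyl_diff (D : ℕ) (α : ℕ → ℝ) (n h h' : ℕ) :
    ∑ i ∈ Finset.range D, α i * ((n + h : ℕ) : ℝ) ^ i +
      -(∑ i ∈ Finset.range D, α i * ((n + h' : ℕ) : ℝ) ^ i) =
    ∑ j ∈ Finset.range D, (∑ i ∈ Finset.range D,
      α i * (((i.choose j : ℕ) : ℝ) * ((h : ℝ) ^ (i - j) - (h' : ℝ) ^ (i - j)))) * (n : ℝ) ^ j := by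
  have key : ∀ (x : ℝ) (i : ℕ), i < D → ((n : ℝ) + x) ^ i =
      ∑ j ∈ Finset.range D, (n : ℝ) ^ j * x ^ (i - j) * (i.choose j : ℕ) := by
    intro x i hi
    rw [add_pow]
    apply Finset.sum_subset
    · intro j hj; simp only [Finset.mem_range] at *; omega
    · intro j _ hj
      rw [Nat.choose_eq_zero_of_lt (by simpa using hj)]; simp
  simp_rw [Finset.sum_mul]
  rw [Finset.sum_comm, ← sub_eq_add_neg, ← Finset.sum_sub_distrib]
  refine Finset.sum_congr rfl fun i hi => ?_
  push_cast
  rw [key _ i (Finset.mem_range.1 hi), key _ i (Finset.mem_range.1 hi), ← mul_sub,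
    ← Finset.sum_sub_distrib, Finset.mul_sum]
  refine Finset.sum_congr rfl fun j _ => ?_
  ring

lemma weyl_main (D t : ℕ) : ∀ (α : ℕ → ℝ), t + 1 < D → Irrational (α (t + 1)) →
    (∀ j, t + 1 < j → j < D → α j ∈ (algebraMap ℚ ℝ).range) →
    (fun N : ℕ => ∑ n ∈ Finset.range N, wE (∑ i ∈ Finset.range D, α i * (n : ℝ) ^ i))
      =o[atTop] (fun N : ℕ => (N : ℝ)) := by
  induction t with
  | zero => intro α hD h1 h2; exact weyl_base D α hD h1 h2
  | succ t ih =>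
    intro α hD hirr hrat
    apply vdc _ (fun n => (wE_norm _).le)
    intro h h' hne
    simp_rw [wE_conj, ← wE_add, weyl_diff]
    have hK : ∀ i j : ℕ, (((i.choose j : ℕ) : ℝ) * ((h : ℝ) ^ (i - j) - (h' : ℝ) ^ (i - j)))
        ∈ (algebraMap ℚ ℝ).range := by
      intro i j
      exact mul_mem (natCast_mem _ _) (sub_mem (pow_mem (natCast_mem _ _) _) (pow_mem (natCast_mem _ _) _))
    have hterm : ∀ i j : ℕ, i < D → (t + 2 < i ∨ i ≤ j) →
        α i * (((i.choose j : ℕ) : ℝ) * ((h : ℝ) ^ (i - j) - (h' : ℝ) ^ (i - j)))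
        ∈ (algebraMap ℚ ℝ).range := by
      intro i j hi hij
      rcases hij with hij | hij
      · exact mul_mem (hrat i hij hi) (hK i j)
      · rw [Nat.sub_eq_zero_of_le hij]; simp
    apply ih _ (by omega)
    · rw [← Finset.add_sum_erase _ _ (Finset.mem_range.2 hD)]
      have h1 : ∑ i ∈ (Finset.range D).erase (t + 1 + 1),
        α i * (((i.choose (t + 1) : ℕ) : ℝ) * ((h : ℝ) ^ (i - (t + 1)) - (h' : ℝ) ^ (i - (t + 1))))
        ∈ (algebraMap ℚ ℝ).range := by
        apply sum_mem
        intro i hi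
        rw [Finset.mem_erase, Finset.mem_range] at hi
        exact hterm i _ hi.2 (by omega)
      obtain ⟨r, hr⟩ := h1
      rw [← hr, eq_ratCast]
      apply Irrational.add_ratCast
      have h3 : ((h : ℝ) ^ (t + 1 + 1 - (t + 1)) - (h' : ℝ) ^ (t + 1 + 1 - (t + 1))) = ((h - h' : ℤ) : ℝ) := by
        rw [show t + 1 + 1 - (t + 1) = 1 by omega]; simp
      rw [h3, Nat.choose_succ_self_right, ← mul_assoc]
      exact (hirr.mul_natCast (by omega)).mul_intCast (by omega)
    · intro j hj hjD
      apply sum_mem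
      intro i hi
      exact hterm i j (Finset.mem_range.1 hi) (by omega)

lemma weyl_nat (D : ℕ) (α : ℕ → ℝ) (h : ∃ i, 1 ≤ i ∧ i < D ∧ Irrational (α i)) :
    (fun N : ℕ => ∑ n ∈ Finset.range N, wE (∑ i ∈ Finset.range D, α i * (n : ℝ) ^ i))
      =o[atTop] (fun N : ℕ => (N : ℝ)) := by
  classical
  obtain ⟨i0, h1, h2, h3⟩ := h
  set S := (Finset.range D).filter (fun i => 1 ≤ i ∧ Irrational (α i)) with hS
  have hne : S.Nonempty := ⟨i0, by simp [hS, h1, h2, h3]⟩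
  have hm := Finset.max'_mem S hne
  have hmax : ∀ j, j ∈ S → j ≤ S.max' hne := fun j hj => Finset.le_max' S j hj
  generalize S.max' hne = k at hm hmax
  simp only [hS, Finset.mem_filter, Finset.mem_range] at hm hmax
  obtain ⟨t, ht⟩ : ∃ t, k = t + 1 := ⟨k - 1, by omega⟩
  rw [ht] at hm hmax
  refine weyl_main D t α hm.1 hm.2.2 ?_
  intro j hj hjD
  by_contra hcon
  have : Irrational (α j) := by
    rintro ⟨r, hr⟩
    exact hcon ⟨r, by rw [eq_ratCast, hr]⟩
  have := hmax j ⟨hjD, by omega, this⟩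
  omega

lemma sum_symm (f : ℤ → ℂ) (N : ℕ) : ∑ n ∈ Finset.Icc (-(N : ℤ)) (N : ℤ), f n =
    ∑ n ∈ Finset.range (N + 1), f n + ∑ n ∈ Finset.range (N + 1), f (-(n : ℤ)) - f 0 := by
  induction N with
  | zero => simp
  | succ N ih =>
    have : Finset.Icc (-((N + 1 : ℕ) : ℤ)) ((N + 1 : ℕ) : ℤ) =
      insert ((N + 1 : ℕ) : ℤ) (insert (-((N + 1 : ℕ) : ℤ)) (Finset.Icc (-(N : ℤ)) (N : ℤ))) := by
      ext x; simp only [Finset.mem_Icc, Finset.mem_insert]; omega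
    rw [this, Finset.sum_insert, Finset.sum_insert, ih, Finset.sum_range_succ _ (N + 1),
      Finset.sum_range_succ _ (N + 1)]
    · ring
    · simp only [Finset.mem_Icc]; omega
    · simp only [Finset.mem_Icc, Finset.mem_insert]; omega

lemma weyl_int (D : ℕ) (α : ℕ → ℝ) (h : ∃ i, 1 ≤ i ∧ i < D ∧ Irrational (α i)) :
    Tendsto (fun N : ℕ => ((1 / (2 * (N : ℝ) + 1) : ℝ) : ℂ) * ∑ n ∈ Finset.Icc (-(N : ℤ)) (N : ℤ),
      wE (∑ i ∈ Finset.range D, α i * (n : ℝ) ^ i)) atTop (nhds 0) := by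
  have ho : (fun N : ℕ => ∑ n ∈ Finset.Icc (-(N : ℤ)) (N : ℤ),
      wE (∑ i ∈ Finset.range D, α i * (n : ℝ) ^ i)) =o[atTop] (fun N : ℕ => ((N + 1 : ℕ) : ℝ)) := by
    simp_rw [sum_symm (fun n : ℤ => wE (∑ i ∈ Finset.range D, α i * (n : ℝ) ^ i))]
    refine IsLittleO.sub (IsLittleO.add ?_ ?_) ?_
    · simpa [Function.comp_def] using (weyl_nat D α h).comp_tendsto (tendsto_add_atTop_nat 1)
    · have h' : ∃ i, 1 ≤ i ∧ i < D ∧ Irrational (α i * (-1) ^ i) := by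
        obtain ⟨i, h1, h2, h3⟩ := h
        refine ⟨i, h1, h2, ?_⟩
        rcases neg_one_pow_eq_or ℝ i with e | e <;> rw [e]
        · simpa using h3
        · simpa using h3.neg
      have := (weyl_nat D _ h').comp_tendsto (tendsto_add_atTop_nat 1)
      simp only [Function.comp_def] at this
      refine this.congr_left fun N => ?_
      refine Finset.sum_congr rfl fun n _ => ?_
      congr 1
      refine Finset.sum_congr rfl fun i _ => ?_
      push_cast
      rw [mul_assoc, ← mul_pow, neg_one_mul]
    · refine isLittleO_const_left.2 (Or.inr ?_)
      have := (tendsto_natCast_atTop_atTop (R := ℝ)).comp (tendsto_add_atTop_nat 1)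
      exact tendsto_norm_atTop_atTop.comp this
  have ho2 : (fun N : ℕ => ∑ n ∈ Finset.Icc (-(N : ℤ)) (N : ℤ),
      wE (∑ i ∈ Finset.range D, α i * (n : ℝ) ^ i)) =o[atTop]
        (fun N : ℕ => ((2 * (N : ℝ) + 1 : ℝ) : ℂ)) := by
    refine ho.trans_isBigO (IsBigO.of_bound 1 (Eventually.of_forall fun N => ?_))
    rw [Complex.norm_real, Real.norm_of_nonneg (by positivity), Real.norm_of_nonneg (by positivity)]
    push_cast
    have : (0 : ℝ) ≤ N := by positivity
    linarith
  refine ho2.tendsto_div_nhds_zero.congr fun N => ?_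
  push_cast
  rw [div_eq_inv_mul, one_div]

lemma vol_univ_one : (volume : Measure (AddCircle (1 : ℝ))) Set.univ = 1 := by
  simp [AddCircle.measure_univ]

noncomputable def wMean (P : ℤ → ℝ) (N : ℕ) (G : AddCircle (1 : ℝ) → ℂ) : ℂ :=
  ((1 / (2 * (N : ℝ) + 1) : ℝ) : ℂ) * ∑ n ∈ Finset.Icc (-(N : ℤ)) (N : ℤ), G ((P n : ℝ) : AddCircle (1 : ℝ))

lemma wMean_norm (P : ℤ → ℝ) (N : ℕ) (G : AddCircle (1 : ℝ) → ℂ) (c : ℝ) (h : ∀ x, ‖G x‖ ≤ c) :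
    ‖wMean P N G‖ ≤ c := by
  rw [wMean, norm_mul, Complex.norm_real, Real.norm_of_nonneg (by positivity), one_div,
    inv_mul_le_iff₀ (by positivity)]
  refine (norm_sum_le_of_le _ (n := fun _ => c) fun n _ => h _).trans (le_of_eq ?_)
  simp only [Finset.sum_const, Int.card_Icc, nsmul_eq_mul]
  congr 1
  have : ((N : ℤ) + 1 - -(N : ℤ)).toNat = 2 * N + 1 := by omega
  rw [this]; push_cast; ring

lemma weyl_span (P : ℤ → ℝ)
    (hW : ∀ m : ℤ, m ≠ 0 → Tendsto (fun N => wMean P N (fourier m)) atTop (nhds 0))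
    (G : C(AddCircle (1 : ℝ), ℂ)) (hG : G ∈ Submodule.span ℂ (Set.range (fourier (T := 1)))) :
    Tendsto (fun N => wMean P N G) atTop (nhds (∫ x, G x)) := by
  have hint : ∀ G : C(AddCircle (1 : ℝ), ℂ), Integrable G volume := fun G =>
    G.continuous.integrable_of_hasCompactSupport (HasCompactSupport.of_compactSpace _)
  induction hG using Submodule.span_induction with
  | mem x hx =>
    obtain ⟨m, rfl⟩ := hx
    by_cases hm : m = 0
    · subst hm
      have h1 : ∫ x : AddCircle (1 : ℝ), (fourier (T := 1) 0) x = 1 := by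
        simp [Measure.real, vol_univ_one]
      rw [h1]
      refine tendsto_const_nhds.congr fun N => ?_
      simp only [wMean, fourier_zero, Finset.sum_const, Int.card_Icc, nsmul_eq_mul]
      have : ((N : ℤ) + 1 - -(N : ℤ)).toNat = 2 * N + 1 := by omega
      rw [this]; push_cast
      have : (2 * (N : ℂ) + 1) ≠ 0 := by exact_mod_cast Nat.succ_ne_zero (2 * N)
      field_simp
    · rw [integral_eq_zero_of_add_right_eq_neg (fourier_add_half_inv_index hm one_pos)]
      exact hW m hm
  | zero => simp [wMean]
  | add x y _ _ hx hy =>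
    have := hx.add hy
    simp only [ContinuousMap.add_apply]
    rw [integral_add (hint x) (hint y)]
    refine this.congr fun N => ?_
    simp [wMean, Finset.sum_add_distrib, mul_add]
  | smul a x _ hx =>
    have := hx.const_mul a
    simp only [ContinuousMap.smul_apply, smul_eq_mul]
    rw [integral_const_mul]
    refine this.congr fun N => ?_
    simp only [wMean, ContinuousMap.smul_apply, smul_eq_mul, ← Finset.mul_sum]
    ring

lemma weyl_cont (P : ℤ → ℝ)
    (hW : ∀ m : ℤ, m ≠ 0 → Tendsto (fun N => wMean P N (fourier m)) atTop (nhds 0))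
    (F : C(AddCircle (1 : ℝ), ℂ)) :
    Tendsto (fun N => wMean P N F) atTop (nhds (∫ x, F x)) := by
  have hint : ∀ G : C(AddCircle (1 : ℝ), ℂ), Integrable G volume := fun G =>
    G.continuous.integrable_of_hasCompactSupport (HasCompactSupport.of_compactSpace _)
  rw [Metric.tendsto_nhds]
  intro ε hε
  have hF : F ∈ (Submodule.span ℂ (Set.range (fourier (T := 1)))).topologicalClosure := by
    rw [span_fourier_closure_eq_top]; trivial
  rw [← SetLike.mem_coe, Submodule.topologicalClosure_coe, Metric.mem_closure_iff] at hF
  obtain ⟨G, hG, hFG⟩ := hF (ε / 3) (by positivity)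
  rw [dist_eq_norm] at hFG
  have hpt : ∀ x, ‖(F - G) x‖ ≤ ‖F - G‖ := (F - G).norm_coe_le_norm
  filter_upwards [(Metric.tendsto_nhds.1 (weyl_span P hW G hG)) (ε / 3) (by positivity)] with N hN
  rw [dist_eq_norm] at hN ⊢
  have h1 : ‖wMean P N (F - G : C(AddCircle (1 : ℝ), ℂ))‖ ≤ ‖F - G‖ := wMean_norm _ _ _ _ hpt
  have h2 : ‖∫ x, (F - G) x‖ ≤ ‖F - G‖ := by
    simpa [Measure.real, vol_univ_one] using
      norm_integral_le_of_norm_le_const (μ := (volume : Measure (AddCircle (1 : ℝ))))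
        (Eventually.of_forall hpt)
  have e1 : wMean P N (F - G : C(AddCircle (1 : ℝ), ℂ)) = wMean P N F - wMean P N G := by
    simp [wMean, Finset.sum_sub_distrib, mul_sub]
  have e2 : ∫ x, (F - G) x = (∫ x, F x) - ∫ x, G x := by
    simp only [ContinuousMap.sub_apply]
    exact integral_sub (hint F) (hint G)
  have e3 : wMean P N F - ∫ x, F x = wMean P N (F - G : C(AddCircle (1 : ℝ), ℂ)) +
      (wMean P N G - ∫ x, G x) - ∫ x, (F - G) x := by
    rw [e1, e2]; ring
  rw [e3]
  have := norm_sub_le (wMean P N (F - G : C(AddCircle (1 : ℝ), ℂ)) +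
      (wMean P N G - ∫ x, G x)) (∫ x, (F - G) x)
  have := norm_add_le (wMean P N (F - G : C(AddCircle (1 : ℝ), ℂ))) (wMean P N G - ∫ x, G x)
  linarith

end helpers

/-- Weyl equidistribution: if `P(n) = α₀ + α₁n + ⋯ + α_d n^d` has some nonconstant
coefficient irrational, then `P mod 1` is equidistributed in `ℝ/ℤ`; in particular its
range is dense. -/
theorem stmt_15 (d : ℕ) (α : ℕ → ℝ) (P : ℤ → ℝ)
    (hP : ∀ n : ℤ, P n = ∑ i ∈ Finset.range (d + 1), α i * (n : ℝ) ^ i)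
    (hirr : ∃ i ∈ Finset.Icc 1 d, Irrational (α i)) :
    (∀ F : C(AddCircle (1 : ℝ), ℝ),
      Tendsto (fun N : ℕ => (1 / (2 * (N : ℝ) + 1)) *
          ∑ n ∈ Finset.Icc (-(N : ℤ)) (N : ℤ), F ((P n : ℝ) : AddCircle (1 : ℝ)))
        atTop (nhds (∫ x : AddCircle (1 : ℝ), F x))) ∧
    DenseRange (fun n : ℤ => ((P n : ℝ) : AddCircle (1 : ℝ))) := by
  have hW : ∀ m : ℤ, m ≠ 0 → Tendsto (fun N => wMean P N (fourier m)) atTop (nhds 0) := by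
    intro m hm
    obtain ⟨i, hi, hirr⟩ := hirr
    rw [Finset.mem_Icc] at hi
    refine (weyl_int (d + 1) (fun i => m * α i)
      ⟨i, hi.1, by omega, hirr.intCast_mul hm⟩).congr fun N => ?_
    rw [wMean]
    congr 1
    refine Finset.sum_congr rfl fun n _ => ?_
    rw [fourier_coe_apply, wE, hP]
    simp_rw [mul_assoc (m : ℝ), ← Finset.mul_sum]
    congr 1
    push_cast
    ring
  have main : ∀ F : C(AddCircle (1 : ℝ), ℝ),
      Tendsto (fun N : ℕ => (1 / (2 * (N : ℝ) + 1)) *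
          ∑ n ∈ Finset.Icc (-(N : ℤ)) (N : ℤ), F ((P n : ℝ) : AddCircle (1 : ℝ)))
        atTop (nhds (∫ x : AddCircle (1 : ℝ), F x)) := by
    intro F
    have h := weyl_cont P hW ⟨fun x => (F x : ℂ), by fun_prop⟩
    simp only [ContinuousMap.coe_mk] at h
    rw [integral_complex_ofReal] at h
    have h2 := (Complex.continuous_re.tendsto _).comp h
    rw [Complex.ofReal_re] at h2
    refine h2.congr fun N => ?_
    simp only [Function.comp_def, wMean]
    rw [← Complex.ofReal_sum, ← Complex.ofReal_mul, Complex.ofReal_re]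
  refine ⟨main, ?_⟩
  set S := Set.range (fun n : ℤ => ((P n : ℝ) : AddCircle (1 : ℝ))) with hS
  by_contra hnd
  have hne : S.Nonempty := Set.range_nonempty _
  obtain ⟨x, hx⟩ : ∃ x, x ∉ closure S := by
    by_contra! hcon
    exact hnd hcon
  have hc : Continuous (fun y => Metric.infDist y S) := Metric.continuous_infDist_pt S
  have h1 := main ⟨fun y => Metric.infDist y S, hc⟩
  simp only [ContinuousMap.coe_mk] at h1
  have h0 : ∀ n : ℤ, Metric.infDist ((P n : ℝ) : AddCircle (1 : ℝ)) S = 0 := fun n =>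
    Metric.infDist_zero_of_mem ⟨n, rfl⟩
  simp only [h0, Finset.sum_const_zero, mul_zero] at h1
  have h2 := tendsto_nhds_unique h1 tendsto_const_nhds
  have h3 := hc.integral_pos_of_hasCompactSupport_nonneg_nonzero (μ := volume) (x := x)
    (HasCompactSupport.of_compactSpace _) (fun y => Metric.infDist_nonneg)
    (fun h => hx ((Metric.mem_closure_iff_infDist_zero hne).2 h))
  exact h3.ne' h2
end

section
/- Let P : ℤ → ℝ/ℤ be a polynomial of degree at most d (P(n) = α₀ + α₁n + ⋯ + α_d n^d) that avoids some interval I ⊂ ℝ/ℤ of positive length. Then all nonconstant coefficients α₁,…,α_d are rational (torsion in ℝ/ℤ); in particular P is periodic: there is Q ≥ 1 with P(n+Q) = P(n) for all n. -/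
open Filter Topology

noncomputable def avg16 (u : ℤ → ℂ) (N : ℕ) : ℂ := (∑ n ∈ Finset.range N, u (n : ℤ)) / (N : ℂ)

lemma avg16_sum {ι : Type*} (s : Finset ι) (f : ι → ℤ → ℂ) (N : ℕ) :
    avg16 (fun n => ∑ i ∈ s, f i n) N = ∑ i ∈ s, avg16 (f i) N := by
  unfold avg16
  rw [Finset.sum_comm, Finset.sum_div]

lemma avg16_shift_one (u : ℤ → ℂ) (hu : ∀ n, ‖u n‖ ≤ 1) :
    Tendsto (fun N => avg16 (fun n => u (n + 1)) N - avg16 u N) atTop (𝓝 0) := by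
  have h1 : ∀ N, avg16 (fun n => u (n + 1)) N - avg16 u N = (u N - u 0) / (N : ℂ) := by
    intro N
    unfold avg16
    rw [← sub_div, ← Finset.sum_sub_distrib]
    congr 1
    have := Finset.sum_range_sub (fun n : ℕ => u (n : ℤ)) N
    simpa using this
  apply squeeze_zero_norm (a := fun N : ℕ => 2 / (N : ℝ))
  · intro N
    rw [h1, norm_div]
    have : ‖u N - u 0‖ ≤ 2 := (norm_sub_le _ _).trans (by linarith [hu N, hu 0])
    simp only [Complex.norm_natCast]
    gcongr
  · exact tendsto_const_div_atTop_nhds_zero_nat 2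

lemma avg16_shift (u : ℤ → ℂ) (hu : ∀ n, ‖u n‖ ≤ 1) (h : ℕ) :
    Tendsto (fun N => avg16 (fun n => u (n + h)) N - avg16 u N) atTop (𝓝 0) := by
  induction h with
  | zero => simp
  | succ h ih =>
    have := (avg16_shift_one (fun n => u (n + h)) (fun n => hu _)).add ih
    simp only [add_zero] at this
    refine this.congr fun N => ?_
    have : (fun n : ℤ => u (n + ((h + 1 : ℕ) : ℤ))) = fun n => u (n + 1 + h) := by
      funext n; congr 1; push_cast; ring
    rw [this]; ring

lemma avg16_conj (u : ℤ → ℂ) (N : ℕ) :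
    avg16 (fun n => (starRingEnd ℂ) (u n)) N = (starRingEnd ℂ) (avg16 u N) := by
  simp [avg16, map_sum]

lemma avg16_cs (v : ℤ → ℂ) (N : ℕ) :
    ‖avg16 v N‖ ^ 2 ≤ ‖avg16 (fun n => v n * (starRingEnd ℂ) (v n)) N‖ := by
  have h2 : avg16 (fun n => v n * (starRingEnd ℂ) (v n)) N
      = (((∑ n ∈ Finset.range N, ‖v n‖ ^ 2) / N : ℝ) : ℂ) := by
    unfold avg16
    simp only [Complex.mul_conj']
    push_cast; rfl
  rw [h2, Complex.norm_real]
  refine le_trans ?_ (le_abs_self _)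
  unfold avg16
  rw [norm_div, Complex.norm_natCast, div_pow]
  rcases Nat.eq_zero_or_pos N with rfl | hN
  · simp
  have hN' : (0 : ℝ) < N := by exact_mod_cast hN
  rw [div_le_div_iff₀ (by positivity) hN']
  have h3 : ‖∑ n ∈ Finset.range N, v n‖ ^ 2 ≤ (∑ n ∈ Finset.range N, ‖v n‖) ^ 2 := by
    gcongr; exact norm_sum_le _ _
  have h4 := sq_sum_le_card_mul_sum_sq (s := Finset.range N) (f := fun n : ℕ => ‖v n‖)
  rw [Finset.card_range] at h4
  nlinarith

lemma vdc16 (u : ℤ → ℂ) (hu : ∀ n, ‖u n‖ = 1)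
    (h : ∀ k : ℕ, 0 < k → Tendsto (avg16 (fun n => u (n + k) * (starRingEnd ℂ) (u n))) atTop (𝓝 0)) :
    Tendsto (avg16 u) atTop (𝓝 0) := by
  have hlt : ∀ i j : ℕ, j < i → Tendsto (avg16 (fun n => u (n + i) * (starRingEnd ℂ) (u (n + j))))
      atTop (𝓝 0) := by
    intro i j hij
    have h1 := avg16_shift (fun n => u (n + (i - j : ℕ)) * (starRingEnd ℂ) (u n))
      (fun n => by simp [hu]) j
    have h2 := h1.add (h (i - j) (by omega))
    simp only [add_zero, sub_add_cancel] at h2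
    refine h2.congr fun N => ?_
    congr 1; funext n; congr 2; push_cast [hij.le]; ring
  have hij : ∀ i j : ℕ, Tendsto (avg16 (fun n => u (n + i) * (starRingEnd ℂ) (u (n + j))))
      atTop (𝓝 (if i = j then 1 else 0)) := by
    intro i j
    rcases lt_trichotomy i j with hl | rfl | hl
    · rw [if_neg hl.ne]
      have := (Complex.continuous_conj.tendsto 0).comp (hlt j i hl)
      rw [map_zero] at this
      refine this.congr fun N => ?_
      simp only [Function.comp]
      rw [← avg16_conj]
      congr 1; funext n; simp [mul_comm]
    · rw [if_pos rfl]
      refine tendsto_const_nhds.congr' ?_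
      filter_upwards [eventually_gt_atTop 0] with N hN
      simp only [avg16, Complex.mul_conj', hu]
      have : (N : ℂ) ≠ 0 := by exact_mod_cast hN.ne'
      simp [this]
    · rw [if_neg hl.ne']; exact hlt i j hl
  rw [Metric.tendsto_atTop']
  intro ε hε
  obtain ⟨H, hH⟩ := exists_nat_gt ((1 + 2 * ε) / ε ^ 2)
  have hc : Tendsto (fun N => ∑ i ∈ Finset.range H, ∑ j ∈ Finset.range H,
      avg16 (fun n => u (n + i) * (starRingEnd ℂ) (u (n + j))) N) atTop (𝓝 (H : ℂ)) := by
    have := tendsto_finsetSum (Finset.range H) (fun i _ =>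
      tendsto_finsetSum (Finset.range H) (fun j _ => hij i j))
    convert this using 2
    have : ∀ i ∈ Finset.range H, (∑ j ∈ Finset.range H, (if i = j then (1:ℂ) else 0)) = 1 := by
      intro i hi
      rw [Finset.sum_ite_eq, if_pos hi]
    rw [Finset.sum_congr rfl this]; simp
  have hv : Tendsto (fun N => avg16 (fun n => ∑ i ∈ Finset.range H, u (n + i)) N - H * avg16 u N)
      atTop (𝓝 0) := by
    have := tendsto_finsetSum (Finset.range H) (fun i _ => avg16_shift u (fun n => (hu n).le) i)
    simp only [Finset.sum_const_zero] at this
    refine this.congr fun N => ?_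
    rw [avg16_sum, Finset.sum_sub_distrib]; simp
  have e1 := hc.norm.eventually_lt_const (u := (H : ℝ) + 1) (by simp)
  have e2 := hv.norm.eventually_lt_const (u := (1 : ℝ)) (by simp)
  obtain ⟨N0, hN0⟩ := eventually_atTop.1 (e1.and e2)
  refine ⟨N0, fun N hN => ?_⟩
  obtain ⟨h1, h2⟩ := hN0 N hN.le
  rw [dist_zero_right]
  by_contra hcon
  push Not at hcon
  have h3 := avg16_cs (fun n => ∑ i ∈ Finset.range H, u (n + i)) N
  have h4 : avg16 (fun n => (∑ i ∈ Finset.range H, u (n + i)) *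
      (starRingEnd ℂ) (∑ i ∈ Finset.range H, u (n + i))) N = ∑ i ∈ Finset.range H,
      ∑ j ∈ Finset.range H, avg16 (fun n => u (n + i) * (starRingEnd ℂ) (u (n + j))) N := by
    simp only [map_sum, Finset.sum_mul_sum, avg16_sum]
  rw [h4] at h3
  set V := avg16 (fun n => ∑ i ∈ Finset.range H, u (n + i)) N
  have h5 : (H : ℝ) * ‖avg16 u N‖ ≤ ‖V‖ + 1 := by
    have : ‖(H : ℂ) * avg16 u N‖ ≤ ‖V‖ + ‖V - H * avg16 u N‖ := by
      have := norm_sub_le V (V - H * avg16 u N)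
      simpa using this
    rw [norm_mul, Complex.norm_natCast] at this
    linarith
  have h6 : (H : ℝ) * ε ≤ ‖V‖ + 1 := le_trans (by gcongr) h5
  rw [div_lt_iff₀ (by positivity)] at hH
  have hHpos : (0 : ℝ) < H := by
    rcases Nat.eq_zero_or_pos H with rfl | h
    · simp at hH; linarith
    · exact_mod_cast h
  have h7 : 1 < H * ε := by
    by_contra hh
    push Not at hh
    nlinarith
  have h8 : (H * ε - 1) ^ 2 ≤ ‖V‖ ^ 2 := by
    apply pow_le_pow_left₀ <;> linarith
  nlinarith

open scoped fwdDiff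

/-- Weyl sums vanish. -/
lemma weyl16 (k : ℕ) : ∀ (g : ℤ → AddCircle (1 : ℝ)) (c : AddCircle (1 : ℝ)),
    ¬ IsOfFinAddOrder c → (∀ n, (fwdDiff (1 : ℤ))^[k + 1] g n = c) →
    Tendsto (avg16 (fun n => (AddCircle.toCircle (g n) : ℂ))) atTop (𝓝 0) := by
  induction k with
  | zero =>
    intro g c hc hg
    have hs := avg16_shift_one (fun n => (AddCircle.toCircle (g n) : ℂ)) (fun n => (Circle.norm_coe _).le)
    set z : ℂ := (AddCircle.toCircle c : ℂ) with hz
    have hz1 : z - 1 ≠ 0 := by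
      intro h0
      apply hc
      have : AddCircle.toCircle c = AddCircle.toCircle (0 : AddCircle (1:ℝ)) := by
        ext; simp only [AddCircle.toCircle_zero, Circle.coe_one]; exact sub_eq_zero.1 h0
      rw [AddCircle.injective_toCircle one_ne_zero this]
      exact IsOfFinAddOrder.zero
    have hstep : ∀ n, (AddCircle.toCircle (g (n + 1)) : ℂ) = z * AddCircle.toCircle (g n) := by
      intro n
      have := hg n
      simp only [zero_add, Function.iterate_one, fwdDiff] at this
      rw [sub_eq_iff_eq_add.1 this, AddCircle.toCircle_add]; simp [hz]
    have h2 := hs.const_mul (z - 1)⁻¹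
    rw [mul_zero] at h2
    refine h2.congr fun N => ?_
    simp only [hstep]
    unfold avg16
    rw [← Finset.mul_sum]
    field_simp
  | succ k ih =>
    intro g c hc hg
    apply vdc16 _ (fun n => Circle.norm_coe _)
    intro h hh
    have hd : ∀ m : ℕ, ∀ n, (fwdDiff (1 : ℤ))^[k + 1] g (n + m) = (fwdDiff (1 : ℤ))^[k + 1] g n + m • c := by
      intro m
      induction m with
      | zero => simp
      | succ m ihm =>
        intro n
        have := hg (n + m)
        rw [Function.iterate_succ_apply', fwdDiff, sub_eq_iff_eq_add] at this
        rw [Nat.cast_succ, ← add_assoc, this, ihm, succ_nsmul]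
        abel
    have := ih (fun n => g (n + h) - g n) (h • c) ?_ ?_
    · refine this.congr fun N => ?_
      congr 1; funext n
      rw [sub_eq_add_neg, AddCircle.toCircle_add, AddCircle.toCircle_neg, Circle.coe_mul,
        Circle.coe_inv_eq_conj]
    · rw [isOfFinAddOrder_nsmul]; rintro (h1 | h1)
      · exact hc h1
      · omega
    · intro n
      have e : (fun n => g (n + h) - g n) = (fun n => g (n + h)) + (-1 : ℤ) • g := by
        funext n; simp [sub_eq_add_neg]
      rw [e, fwdDiff_iter_add, fwdDiff_iter_const_smul, Pi.add_apply, Pi.smul_apply,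
        fwdDiff_iter_comp_add, hd]
      simp

lemma dense16 (g : ℤ → AddCircle (1 : ℝ))
    (h : ∀ m : ℤ, m ≠ 0 → Tendsto (avg16 (fun n => fourier m (g n))) atTop (𝓝 0)) :
    DenseRange g := by
  have : Fact ((0 : ℝ) < 1) := ⟨one_pos⟩
  let μ := @AddCircle.haarAddCircle (1 : ℝ) _
  have hint : ∀ f : C(AddCircle (1:ℝ), ℂ), MeasureTheory.Integrable f μ := fun f =>
    f.continuous.integrable_of_hasCompactSupport (HasCompactSupport.of_compactSpace _)
  have hspan : ∀ p ∈ Submodule.span ℂ (Set.range (@fourier (1 : ℝ))),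
      Tendsto (avg16 (fun n => p (g n))) atTop (𝓝 (∫ x, p x ∂μ)) := by
    intro p hp
    induction hp using Submodule.span_induction with
    | mem p hp =>
      obtain ⟨m, rfl⟩ := hp
      by_cases hm : m = 0
      · subst hm
        simp only [fourier_zero]
        have : (∫ x : AddCircle (1:ℝ), (1 : ℂ) ∂μ) = 1 := by simp [μ]
        rw [this]
        refine tendsto_const_nhds.congr' ?_
        filter_upwards [eventually_gt_atTop 0] with N hN
        have : (N : ℂ) ≠ 0 := by exact_mod_cast hN.ne'
        simp [avg16, this]
      · have : (∫ x : AddCircle (1:ℝ), fourier m x ∂μ) = 0 :=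
          MeasureTheory.integral_eq_zero_of_add_right_eq_neg (μ := μ)
            (fourier_add_half_inv_index hm one_pos)
        rw [this]; exact h m hm
    | zero => exact (tendsto_const_nhds (x := (0:ℂ))).congr' (Eventually.of_forall fun N => by simp [avg16]) |>.trans (by simp)
    | add p q _ _ hp hq =>
      have e : (∫ x, (p + q) x ∂μ) = (∫ x, p x ∂μ) + ∫ x, q x ∂μ :=
        MeasureTheory.integral_add (hint p) (hint q)
      rw [e]
      refine (hp.add hq).congr fun N => ?_
      simp [avg16, Finset.sum_add_distrib, add_div]
    | smul c p _ hp =>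
      have e : (∫ x, (c • p) x ∂μ) = c * ∫ x, p x ∂μ :=
        MeasureTheory.integral_const_mul c _
      rw [e]
      refine (hp.const_mul c).congr fun N => ?_
      simp [avg16, ← Finset.mul_sum, mul_div_assoc]
  let F : C(AddCircle (1:ℝ), ℂ) :=
    ⟨fun x => ((Metric.infDist x (Set.range g) : ℝ) : ℂ), by
      exact Complex.continuous_ofReal.comp (Metric.continuous_infDist_pt _)⟩
  have hF0 : ∀ n, F (g n) = 0 := by
    intro n
    have : Metric.infDist (g n) (Set.range g) = 0 := Metric.infDist_zero_of_mem ⟨n, rfl⟩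
    simp [F, this]
  have hFint : (∫ x, F x ∂μ) = 0 := by
    rw [← norm_le_zero_iff]
    refine le_of_forall_pos_le_add fun δ hδ => ?_
    have hmem : F ∈ closure (Submodule.span ℂ (Set.range (@fourier (1 : ℝ))) : Set C(AddCircle (1:ℝ), ℂ)) := by
      rw [← Submodule.topologicalClosure_coe, span_fourier_closure_eq_top]; trivial
    obtain ⟨p, hp, hpd⟩ := Metric.mem_closure_iff.1 hmem (δ / 2) (by positivity)
    have hpt : ∀ x, ‖F x - p x‖ ≤ δ / 2 := fun x => by
      rw [← dist_eq_norm]; exact (ContinuousMap.dist_apply_le_dist x).trans hpd.le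
    have h1 : ‖∫ x, p x ∂μ‖ ≤ δ / 2 := by
      refine le_of_tendsto (hspan p hp).norm (Eventually.of_forall fun N => ?_)
      unfold avg16
      rw [norm_div, Complex.norm_natCast]
      rcases Nat.eq_zero_or_pos N with rfl | hN
      · simp; positivity
      have hN' : (0 : ℝ) < N := by exact_mod_cast hN
      rw [div_le_iff₀ hN']
      refine (norm_sum_le _ _).trans ?_
      have : ∀ n ∈ Finset.range N, ‖p (g n)‖ ≤ δ / 2 := fun n _ => by
        have := hpt (g n); rw [hF0, zero_sub, norm_neg] at this; exact this
      refine (Finset.sum_le_card_nsmul _ _ _ this).trans ?_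
      simp [mul_comm]
    have h2 : ‖∫ x, (F x - p x) ∂μ‖ ≤ δ / 2 := by
      have := MeasureTheory.norm_integral_le_of_norm_le_const (μ := μ) (Eventually.of_forall hpt)
      simpa [μ] using this
    rw [MeasureTheory.integral_sub (hint F) (hint p)] at h2
    have := norm_add_le ((∫ x, F x ∂μ) - ∫ x, p x ∂μ) (∫ x, p x ∂μ)
    rw [sub_add_cancel] at this
    linarith
  have hc : Continuous (fun x => Metric.infDist x (Set.range g)) := Metric.continuous_infDist_pt _
  have hR : (∫ x, Metric.infDist x (Set.range g) ∂μ) = 0 := by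
    have : (∫ x, F x ∂μ) = ((∫ x, Metric.infDist x (Set.range g) ∂μ : ℝ) : ℂ) :=
      integral_ofReal
    rw [this] at hFint
    exact_mod_cast hFint
  rw [MeasureTheory.integral_eq_zero_iff_of_nonneg (fun x => Metric.infDist_nonneg)
    (hc.integrable_of_hasCompactSupport (HasCompactSupport.of_compactSpace _))] at hR
  have hz := (Continuous.ae_eq_iff_eq μ hc continuous_const).1 hR
  intro x
  rw [Metric.mem_closure_iff_infDist_zero (Set.range_nonempty g)]
  exact congrFun hz x

lemma polydense16 (k : ℕ) (β : ℕ → AddCircle (1 : ℝ)) (hk : ¬ IsOfFinAddOrder (β (k + 1))) :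
    DenseRange (fun n : ℤ => ∑ i ∈ Finset.range (k + 2), (n ^ i : ℤ) • β i) := by
  apply dense16
  intro m hm
  simp only [fourier_apply]
  have hfd : ∀ (i : ℕ) (b : AddCircle (1:ℝ)) (j : ℕ), (fwdDiff (1 : ℤ))^[j] (fun n : ℤ => (n ^ i : ℤ) • b)
      = fun n => ((fwdDiff (1 : ℤ))^[j] (fun n : ℤ => (n ^ i : ℤ)) n) • b := by
    intro i b j
    induction j with
    | zero => rfl
    | succ j ih => rw [Function.iterate_succ_apply', ih, Function.iterate_succ_apply']
                   funext n; simp [fwdDiff, sub_smul]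
  refine weyl16 k _ (m • ((k + 1).factorial • β (k + 1))) ?_ ?_
  · rw [isOfFinAddOrder_iff_zsmul_eq_zero]
    rintro ⟨t, ht, h0⟩
    apply hk
    rw [isOfFinAddOrder_iff_zsmul_eq_zero]
    refine ⟨t * (m * (k + 1).factorial), ?_, ?_⟩
    · have := Nat.factorial_ne_zero (k + 1)
      exact mul_ne_zero ht (mul_ne_zero hm (by exact_mod_cast this))
    · rw [mul_smul, mul_smul, natCast_zsmul]; exact h0
  · intro n
    have e : (fun n : ℤ => m • ∑ i ∈ Finset.range (k + 2), (n ^ i : ℤ) • β i)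
        = m • ∑ i ∈ Finset.range (k + 2), (fun n : ℤ => (n ^ i : ℤ) • β i) := by
      funext n; simp
    rw [e, fwdDiff_iter_const_smul, fwdDiff_iter_finsetSum, Finset.sum_range_succ]
    rw [Finset.sum_eq_zero, zero_add, hfd, fwdDiff_iter_eq_factorial]
    · simp
    · intro i hi
      rw [hfd, fwdDiff_iter_pow_eq_zero_of_lt (Finset.mem_range.1 hi)]
      funext n; simp

lemma common16 (s : Finset ℕ) (α : ℕ → AddCircle (1 : ℝ)) (h : ∀ i ∈ s, IsOfFinAddOrder (α i)) :
    ∃ Q : ℤ, 1 ≤ Q ∧ ∀ i ∈ s, Q • α i = 0 := by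
  refine ⟨((∏ i ∈ s, addOrderOf (α i) : ℕ) : ℤ), ?_, ?_⟩
  · have : 0 < ∏ i ∈ s, addOrderOf (α i) := Finset.prod_pos fun i hi => (h i hi).addOrderOf_pos
    exact_mod_cast this
  · intro i hi
    rw [natCast_zsmul, ← addOrderOf_dvd_iff_nsmul_eq_zero]
    exact Finset.dvd_prod_of_mem _ hi


/-- If a polynomial `P : ℤ → ℝ/ℤ` of degree at most `d` avoids an interval of positive
length in the circle, then all its nonconstant coefficients are torsion (rational), and
`P` is periodic. -/
theorem stmt_16 (d : ℕ) (α : ℕ → AddCircle (1 : ℝ)) (P : ℤ → AddCircle (1 : ℝ))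
    (hP : ∀ n : ℤ, P n = ∑ i ∈ Finset.range (d + 1), (n ^ i : ℤ) • α i)
    (a ε : ℝ) (hε : 0 < ε)
    (havoid : ∀ n : ℤ, P n ∉ (fun x : ℝ => (x : AddCircle (1 : ℝ))) '' Set.Ioo a (a + ε)) :
    (∀ i ∈ Finset.Icc 1 d, IsOfFinAddOrder (α i)) ∧
    ∃ Q : ℤ, 1 ≤ Q ∧ ∀ n : ℤ, P (n + Q) = P n := by
  have hdvd : ∀ (Q r : ℤ) (b : AddCircle (1:ℝ)), Q • b = 0 → Q ∣ r → r • b = 0 := by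
    rintro Q _ b hb ⟨s, rfl⟩
    rw [mul_comm, mul_smul, hb, smul_zero]
  have main : ∀ i ∈ Finset.Icc 1 d, IsOfFinAddOrder (α i) := by
    by_contra hcon
    push Not at hcon
    classical
    let S := (Finset.Icc 1 d).filter fun i => ¬ IsOfFinAddOrder (α i)
    have hS : S.Nonempty := by
      obtain ⟨i, hi, hi'⟩ := hcon
      exact ⟨i, Finset.mem_filter.2 ⟨hi, hi'⟩⟩
    obtain ⟨hk1, hk2⟩ := Finset.mem_filter.1 (S.max'_mem hS)
    have hkmax : ∀ i ∈ S, i ≤ S.max' hS := fun i hi => S.le_max' i hi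
    generalize S.max' hS = k' at hk1 hk2 hkmax
    obtain ⟨hk1, hkd⟩ := Finset.mem_Icc.1 hk1
    obtain ⟨k, rfl⟩ : ∃ k, k' = k + 1 := ⟨k' - 1, by omega⟩
    obtain ⟨Q, hQ1, hQ⟩ := common16 (Finset.Icc (k + 2) d) α (by
      intro i hi
      obtain ⟨hi1, hi2⟩ := Finset.mem_Icc.1 hi
      by_contra hc
      have := hkmax i (Finset.mem_filter.2 ⟨Finset.mem_Icc.2 ⟨by omega, hi2⟩, hc⟩)
      omega)
    have hd := polydense16 k (fun i => (Q ^ i : ℤ) • α i) (by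
      intro hf
      apply hk2
      rw [isOfFinAddOrder_iff_zsmul_eq_zero] at hf ⊢
      obtain ⟨t, ht, h0⟩ := hf
      refine ⟨t * Q ^ (k + 1), mul_ne_zero ht (pow_ne_zero _ (by omega)), ?_⟩
      rw [mul_smul]; exact h0)
    have hop : IsOpen ((fun x : ℝ => (x : AddCircle (1 : ℝ))) '' Set.Ioo a (a + ε)) :=
      QuotientAddGroup.isOpenMap_coe _ isOpen_Ioo
    obtain ⟨n, hn⟩ := hd.exists_mem_open hop ⟨_, a + ε / 2, ⟨by linarith, by linarith⟩, rfl⟩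
    apply havoid (Q * n)
    convert hn using 1
    rw [hP]
    have hsub : Finset.range (k + 2) ⊆ Finset.range (d + 1) := by
      intro i; simp only [Finset.mem_range]; omega
    rw [← Finset.sum_subset hsub]
    · refine Finset.sum_congr rfl fun i _ => ?_
      rw [← mul_smul, mul_pow, mul_comm]
    · intro i hi hi'
      simp only [Finset.mem_range] at hi hi'
      refine hdvd Q _ _ (hQ i (Finset.mem_Icc.2 ⟨by omega, by omega⟩)) ?_
      exact (Dvd.intro _ rfl).trans (dvd_pow_self _ (by omega))
  refine ⟨main, ?_⟩
  obtain ⟨Q, hQ1, hQ⟩ := common16 _ α main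
  refine ⟨Q, hQ1, fun n => ?_⟩
  rw [hP, hP]
  refine Finset.sum_congr rfl fun i hi => ?_
  rcases Nat.eq_zero_or_pos i with rfl | hi0
  · simp
  rw [← sub_eq_zero, ← sub_smul]
  refine hdvd Q _ _ (hQ i (Finset.mem_Icc.2 ⟨hi0, by have := Finset.mem_range.1 hi; omega⟩)) ?_
  have := sub_dvd_pow_sub_pow (n + Q) n i
  simpa using this
end
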